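/- Let p ≥ 2 and 2 ≤ k ≤ p−1 be integers, M > 0, h ≥ 1, R > 1; let ω ∈ C^∞(ℝ) satisfy |ω(ξ)| ≤ 1 for all ξ, ω(ξ) = 0 for |ξ| ≤ 1, and ω constant on each of {ξ ≥ R} and {ξ ≤ −R}; let ψ ∈ C₀^∞(ℝ) with 0 ≤ ψ ≤ 1, ψ(y) = 1 for |y| ≤ 1/2 and ψ(y) = 0 for |y| ≥ 1. Define λ_{p−k}(x,ξ) := M·ω(ξ/h)·⟨ξ⟩_h^{−k+1}·∫₀ˣ ⟨y⟩^{−(p−k)/(p−1)} ψ(⟨y⟩/⟨ξ⟩_h^{p−1}) dy. Then there exists C_k > 0 (depending on k, p, R, ω, ψ but not on h, M, x, ξ) such that |∂_ξ λ_{p−k}(x,ξ) · ∂_x λ_{p−k}(x,ξ)| ≤ C_k·M²·⟨x⟩^{−(p−k)/(p−1)}·⟨ξ⟩_h^{−k} ≤ C_k·M²·h^{−1} for all x, ξ ∈ ℝ. -/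

import Mathlib

open MeasureTheory Real

noncomputable section

/-- The Japanese bracket `⟨x⟩ = (1 + x²)^(1/2)`. -/
def jb (x : ℝ) : ℝ := Real.sqrt (1 + x ^ 2)

/-- `⟨ξ⟩ₕ = (h² + ξ²)^(1/2)`. -/
def jbh (h ξ : ℝ) : ℝ := Real.sqrt (h ^ 2 + ξ ^ 2)

lemma jb_pos (x : ℝ) : 0 < jb x := Real.sqrt_pos.2 (by positivity)

lemma one_le_jb (x : ℝ) : 1 ≤ jb x := Real.one_le_sqrt.2 (by nlinarith [sq_nonneg x])

lemma abs_le_jb (x : ℝ) : |x| ≤ jb x := Real.abs_le_sqrt (by linarith)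

lemma continuous_jb : Continuous jb := by unfold jb; fun_prop

lemma continuous_jb_rpow (a : ℝ) : Continuous fun y => jb y ^ a :=
  continuous_jb.rpow_const fun y => Or.inl (jb_pos y).ne'

lemma le_jbh {h : ℝ} (ξ : ℝ) : h ≤ jbh h ξ :=
  Real.le_sqrt_of_sq_le (by nlinarith [sq_nonneg ξ])

lemma abs_le_jbh (h ξ : ℝ) : |ξ| ≤ jbh h ξ :=
  Real.abs_le_sqrt (by nlinarith [sq_nonneg h])

lemma jbh_eq_mul_jb {h : ℝ} (hh : 0 < h) (ξ : ℝ) : jbh h ξ = h * jb (ξ / h) := by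
  unfold jbh jb
  rw [← Real.sqrt_sq hh.le, ← Real.sqrt_mul (by positivity), Real.sqrt_sq hh.le]
  congr 1
  field_simp

lemma hasDerivAt_jbh {h : ℝ} (hh : 0 < h) (ξ : ℝ) :
    HasDerivAt (jbh h) (ξ / jbh h ξ) ξ := by
  have h1 : HasDerivAt (fun ζ : ℝ => h ^ 2 + ζ ^ 2) (2 * ξ) ξ := by
    simpa using (hasDerivAt_pow 2 ξ).const_add (h ^ 2)
  have h2 := h1.sqrt (by positivity)
  refine h2.congr_deriv ?_
  rw [mul_div_mul_left _ _ two_ne_zero, jbh]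

lemma hasDerivAt_jbh_rpow {h : ℝ} (hh : 0 < h) (q ξ : ℝ) :
    HasDerivAt (fun ζ => jbh h ζ ^ q) (jbh h ξ ^ q * (q * ξ / jbh h ξ ^ 2)) ξ := by
  have hW : 0 < jbh h ξ := hh.trans_le (le_jbh ξ)
  have h1 := (hasDerivAt_jbh hh ξ).rpow_const (p := q) (Or.inl hW.ne')
  convert h1 using 1
  rw [Real.rpow_sub_one hW.ne']
  field_simp

/-- An integral from `0` to `x ≥ 0` of a function dominated by `B y ^ (-a)` and supported
in `y ≤ T` is at most `B T ^ (1 - a) / (1 - a)`. -/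
lemma abs_integral_le_of_abs_le_rpow_of_nonneg {g : ℝ → ℝ} {a B T x : ℝ} (hg : Continuous g)
    (ha1 : a < 1) (hB : 0 ≤ B) (hT : 0 ≤ T) (hx : 0 ≤ x)
    (hgb : ∀ y, 0 < y → |g y| ≤ B * y ^ (-a)) (hg0 : ∀ y, T < y → g y = 0) :
    |∫ y in (0 : ℝ)..x, g y| ≤ B * (T ^ (1 - a) / (1 - a)) := by
  have key : ∀ z, 0 ≤ z → z ≤ T →
      |∫ y in (0 : ℝ)..z, g y| ≤ B * (T ^ (1 - a) / (1 - a)) := by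
    intro z hz hzT
    have h1 : ‖∫ y in (0 : ℝ)..z, g y‖ ≤ ∫ y in (0 : ℝ)..z, B * y ^ (-a) := by
      refine intervalIntegral.norm_integral_le_of_norm_le hz
        (Filter.Eventually.of_forall fun t ht => hgb t ht.1) ?_
      exact (intervalIntegral.intervalIntegrable_rpow' (by linarith)).const_mul B
    rw [intervalIntegral.integral_const_mul, integral_rpow (Or.inl (by linarith)),
      Real.zero_rpow (by linarith), sub_zero, show -a + 1 = 1 - a by ring] at h1
    refine h1.trans ?_
    have : 0 < 1 - a := by linarith
    gcongr
  rcases le_total x T with hxT | hTx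
  · exact key x hx hxT
  · rw [← intervalIntegral.integral_add_adjacent_intervals (b := T)
      (hg.intervalIntegrable _ _) (hg.intervalIntegrable _ _)]
    have h0 : ∫ y in T..x, g y = 0 := by
      rw [intervalIntegral.integral_of_le hTx]
      exact setIntegral_eq_zero_of_forall_eq_zero fun y hy => hg0 y hy.1
    rw [h0, add_zero]
    exact key T hT le_rfl

/-- Two-sided version of `abs_integral_le_of_abs_le_rpow_of_nonneg`. -/
lemma abs_integral_le_of_abs_le_rpow {g : ℝ → ℝ} {a B T : ℝ} (hg : Continuous g)
    (ha1 : a < 1) (hB : 0 ≤ B) (hT : 0 ≤ T)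
    (hgb : ∀ y, y ≠ 0 → |g y| ≤ B * |y| ^ (-a)) (hg0 : ∀ y, T < |y| → g y = 0) (x : ℝ) :
    |∫ y in (0 : ℝ)..x, g y| ≤ B * (T ^ (1 - a) / (1 - a)) := by
  rcases le_total 0 x with hx | hx
  · refine abs_integral_le_of_abs_le_rpow_of_nonneg hg ha1 hB hT hx (fun y hy => ?_)
      fun y hy => hg0 y (hy.trans_le (le_abs_self y))
    simpa [abs_of_pos hy] using hgb y hy.ne'
  · have h1 : ∫ y in (0 : ℝ)..x, g y = -∫ y in (0 : ℝ)..(-x), g (-y) := by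
      rw [intervalIntegral.integral_comp_neg, neg_zero, neg_neg, intervalIntegral.integral_symm]
    rw [h1, abs_neg]
    refine abs_integral_le_of_abs_le_rpow_of_nonneg (hg.comp continuous_neg) ha1 hB hT
      (by linarith) (fun y hy => ?_) fun y hy => hg0 (-y) ?_
    · simpa [abs_of_pos hy] using hgb (-y) (by simpa using hy.ne')
    · rw [abs_neg]
      exact hy.trans_le (le_abs_self y)

lemma abs_integral_jb_rpow_mul_le {φ : ℝ → ℝ} {a B T : ℝ} (hφ : Continuous φ)
    (ha0 : 0 ≤ a) (ha1 : a < 1) (hφB : ∀ s, |φ s| ≤ B) (hφ0 : ∀ s, 1 < |s| → φ s = 0)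
    (hT : 0 < T) (x : ℝ) :
    |∫ y in (0 : ℝ)..x, jb y ^ (-a) * φ (jb y / T)| ≤ B * (T ^ (1 - a) / (1 - a)) := by
  have hB : 0 ≤ B := (abs_nonneg _).trans (hφB 0)
  refine abs_integral_le_of_abs_le_rpow (g := fun y => jb y ^ (-a) * φ (jb y / T))
    ((continuous_jb_rpow _).mul (hφ.comp (continuous_jb.div_const T))) ha1 hB hT.le
    (fun y hy => ?_) (fun y hy => ?_) x
  · rw [abs_mul, abs_of_pos (Real.rpow_pos_of_pos (jb_pos y) _), mul_comm]
    exact mul_le_mul (hφB _)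
      (Real.rpow_le_rpow_of_nonpos (abs_pos.2 hy) (abs_le_jb y) (by linarith))
      (Real.rpow_pos_of_pos (jb_pos y) _).le hB
  · rw [hφ0, mul_zero]
    rw [abs_of_pos (div_pos (jb_pos y) hT), one_lt_div hT]
    exact hy.trans_le (abs_le_jb y)

/-- Differentiation under the integral sign in the frequency variable. -/
lemma hasDerivAt_integral_jb_rpow_mul {ψ : ℝ → ℝ} {a q B h : ℝ} (hψ : ContDiff ℝ 1 ψ)
    (ha0 : 0 ≤ a) (hq : 0 ≤ q) (hψB : ∀ s, |deriv ψ s * s| ≤ B) (hh : 1 ≤ h) (x ξ : ℝ) :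
    HasDerivAt (fun ζ => ∫ y in (0 : ℝ)..x, jb y ^ (-a) * ψ (jb y / jbh h ζ ^ q))
      (-(q * ξ / jbh h ξ ^ 2) * ∫ y in (0 : ℝ)..x,
        jb y ^ (-a) * (deriv ψ (jb y / jbh h ξ ^ q) * (jb y / jbh h ξ ^ q))) ξ := by
  have hh0 : 0 < h := by linarith
  have hW : ∀ ζ, 1 ≤ jbh h ζ := fun ζ => hh.trans (le_jbh ζ)
  have hψ' : Continuous (deriv ψ) := hψ.continuous_deriv le_rfl
  have hcont : ∀ ζ, Continuous fun y => jb y ^ (-a) * ψ (jb y / jbh h ζ ^ q) := fun ζ =>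
    (continuous_jb_rpow _).mul (hψ.continuous.comp (continuous_jb.div_const _))
  have hcont' : ∀ ζ, Continuous fun y => -(q * ζ / jbh h ζ ^ 2) *
      (jb y ^ (-a) * (deriv ψ (jb y / jbh h ζ ^ q) * (jb y / jbh h ζ ^ q))) := fun ζ =>
    continuous_const.mul ((continuous_jb_rpow _).mul
      ((hψ'.comp (continuous_jb.div_const _)).mul (continuous_jb.div_const _)))
  rw [← intervalIntegral.integral_const_mul]
  refine (intervalIntegral.hasDerivAt_integral_of_dominated_loc_of_deriv_le
    (F := fun ζ y => jb y ^ (-a) * ψ (jb y / jbh h ζ ^ q))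
    (F' := fun ζ y => -(q * ζ / jbh h ζ ^ 2) *
      (jb y ^ (-a) * (deriv ψ (jb y / jbh h ζ ^ q) * (jb y / jbh h ζ ^ q))))
    (bound := fun _ => q * B) Filter.univ_mem
    (Filter.Eventually.of_forall fun ζ => (hcont ζ).aestronglyMeasurable)
    ((hcont ξ).intervalIntegrable _ _) (hcont' ξ).aestronglyMeasurable
    (Filter.Eventually.of_forall fun y _ ζ _ => ?_) intervalIntegrable_const
    (Filter.Eventually.of_forall fun y _ ζ _ => ?_)).2
  · rw [Real.norm_eq_abs, abs_mul, abs_mul, abs_of_pos (Real.rpow_pos_of_pos (jb_pos y) _)]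
    have h1 : |-(q * ζ / jbh h ζ ^ 2)| ≤ q := by
      rw [abs_neg, abs_div, abs_mul, abs_of_nonneg hq, abs_of_nonneg (sq_nonneg (jbh h ζ)),
        div_le_iff₀ (by have := hW ζ; positivity)]
      have := abs_le_jbh h ζ
      gcongr
      nlinarith [hW ζ]
    have h2 : jb y ^ (-a) ≤ 1 := Real.rpow_le_one_of_one_le_of_nonpos (one_le_jb y) (by linarith)
    have h3 := hψB (jb y / jbh h ζ ^ q)
    have h4 : jb y ^ (-a) * |deriv ψ (jb y / jbh h ζ ^ q) * (jb y / jbh h ζ ^ q)| ≤ B :=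
      (mul_le_of_le_one_left (abs_nonneg _) h2).trans h3
    have := Real.rpow_pos_of_pos (jb_pos y) (-a)
    gcongr
  · have hpos : 0 < jbh h ζ := by linarith [hW ζ]
    have hqpos : 0 < jbh h ζ ^ q := Real.rpow_pos_of_pos hpos q
    have h1 : HasDerivAt (fun ζ => jb y / jbh h ζ ^ q)
        (-(jb y / jbh h ζ ^ q) * (q * ζ / jbh h ζ ^ 2)) ζ := by
      refine ((hasDerivAt_const ζ (jb y)).div (hasDerivAt_jbh_rpow hh0 q ζ)
        hqpos.ne').congr_deriv ?_
      field_simp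
      ring
    refine (((hψ.differentiable one_ne_zero _).hasDerivAt.comp ζ h1).const_mul
      (jb y ^ (-a))).congr_deriv ?_
    ring

lemma deriv_eq_zero_of_eq_const_on_Ioi {f : ℝ → ℝ} {r s c : ℝ} (hf : ∀ t, r < t → f t = c)
    (hs : r < s) : deriv f s = 0 := by
  have : f =ᶠ[nhds s] fun _ => c := by
    filter_upwards [Ioi_mem_nhds hs] with t ht using hf t ht
  rw [this.deriv_eq, deriv_const]

lemma deriv_eq_zero_of_eq_const_on_Iio {f : ℝ → ℝ} {r s c : ℝ} (hf : ∀ t, t < r → f t = c)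
    (hs : s < r) : deriv f s = 0 := by
  have : f =ᶠ[nhds s] fun _ => c := by
    filter_upwards [Iio_mem_nhds hs] with t ht using hf t ht
  rw [this.deriv_eq, deriv_const]

lemma exists_abs_le_of_continuous_of_eq_zero {f : ℝ → ℝ} (hf : Continuous f) {r : ℝ}
    (h0 : ∀ s, r < |s| → f s = 0) : ∃ B, 0 ≤ B ∧ ∀ s, |f s| ≤ B := by
  obtain ⟨B, hB⟩ := (isCompact_Icc (a := -r) (b := r)).exists_bound_of_continuousOn
    hf.continuousOn
  refine ⟨max B 0, le_max_right _ _, fun s => ?_⟩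
  rcases le_or_gt |s| r with hs | hs
  · exact (hB s (abs_le.1 hs)).trans (le_max_left _ _)
  · simp [h0 s hs]

/-- The bound on the frequency derivative `∂_ξ λ` by a multiple of `M ⟨ξ⟩ₕ⁻¹`. -/
lemma abs_deriv_symbol_le {ω ψ : ℝ → ℝ} {a q κ A B M h : ℝ} (hω : Differentiable ℝ ω)
    (hωb : ∀ t, |ω t| ≤ 1) (hωA : ∀ t, |deriv ω t * jb t| ≤ A) (hψ : ContDiff ℝ 1 ψ)
    (hψb : ∀ s, |ψ s| ≤ 1) (hψ0 : ∀ s, 1 < |s| → ψ s = 0)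
    (hψB : ∀ s, |deriv ψ s * s| ≤ B) (hψd : ∀ s, 1 < |s| → deriv ψ s = 0)
    (ha0 : 0 ≤ a) (ha1 : a < 1) (hq : 0 ≤ q) (hκ : 1 ≤ κ) (hqa : q * (1 - a) = κ - 1)
    (hM : 0 < M) (hh : 1 ≤ h) (x ξ : ℝ) :
    |deriv (fun ζ => M * ω (ζ / h) * jbh h ζ ^ (-κ + 1) *
        ∫ y in (0 : ℝ)..x, jb y ^ (-a) * ψ (jb y / jbh h ζ ^ q)) ξ| ≤
      (A + (κ - 1) + q * B) / (1 - a) * M * (jbh h ξ)⁻¹ := by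
  have hh0 : 0 < h := by linarith
  have hW : 0 < jbh h ξ := hh0.trans_le (le_jbh ξ)
  have hB : 0 ≤ B := (abs_nonneg _).trans (hψB 0)
  have ha : 0 < 1 - a := by linarith
  have hTpow : (jbh h ξ ^ q) ^ (1 - a) = jbh h ξ ^ (κ - 1) := by
    rw [← Real.rpow_mul hW.le, hqa]
  have hT : 0 < jbh h ξ ^ q := Real.rpow_pos_of_pos hW q
  have hI := abs_integral_jb_rpow_mul_le hψ.continuous ha0 ha1 hψb hψ0 hT x
  have hJ := abs_integral_jb_rpow_mul_le (φ := fun s => deriv ψ s * s)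
    ((hψ.continuous_deriv le_rfl).mul continuous_id) ha0 ha1 hψB
    (fun s hs => by simp [hψd s hs]) hT x
  have hdI := hasDerivAt_integral_jb_rpow_mul hψ ha0 hq hψB hh x ξ
  have hdω : HasDerivAt (fun ζ => ω (ζ / h)) (deriv ω (ξ / h) * (1 / h)) ξ :=
    (hω _).hasDerivAt.comp ξ ((hasDerivAt_id ξ).div_const h)
  have hdW := hasDerivAt_jbh_rpow hh0 (-κ + 1) ξ
  have hd := (((hdω.const_mul M).mul hdW).mul hdI).deriv
  simp only [Pi.mul_def] at hd
  rw [hd]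
  rw [hTpow] at hI hJ
  have hP : 0 < jbh h ξ ^ (-κ + 1) := Real.rpow_pos_of_pos hW _
  have hPQ : jbh h ξ ^ (-κ + 1) * jbh h ξ ^ (κ - 1) = 1 := by
    rw [← Real.rpow_add hW]; simp
  have hωW : |deriv ω (ξ / h) * (1 / h)| ≤ A * (jbh h ξ)⁻¹ := by
    have h1 := hωA (ξ / h)
    rw [← div_eq_mul_inv, le_div_iff₀ hW]
    refine le_trans (le_of_eq ?_) h1
    rw [← abs_of_pos hW, ← abs_mul, jbh_eq_mul_jb hh0]
    congr 1
    field_simp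
  have hξW : |ξ / jbh h ξ ^ 2| ≤ (jbh h ξ)⁻¹ := by
    rw [abs_div, abs_of_pos (by positivity : 0 < jbh h ξ ^ 2), div_le_iff₀ (by positivity)]
    calc |ξ| ≤ jbh h ξ := abs_le_jbh h ξ
      _ = _ := by field_simp
  generalize (∫ y in (0 : ℝ)..x, jb y ^ (-a) * ψ (jb y / jbh h ξ ^ q)) = I at *
  generalize (∫ y in (0 : ℝ)..x, jb y ^ (-a) *
    (deriv ψ (jb y / jbh h ξ ^ q) * (jb y / jbh h ξ ^ q))) = J at *
  have hI' : |jbh h ξ ^ (-κ + 1) * I| ≤ 1 / (1 - a) := by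
    rw [abs_mul, abs_of_pos hP]
    calc _ ≤ jbh h ξ ^ (-κ + 1) * (1 * (jbh h ξ ^ (κ - 1) / (1 - a))) := by gcongr
      _ = jbh h ξ ^ (-κ + 1) * jbh h ξ ^ (κ - 1) / (1 - a) := by ring
      _ = _ := by rw [hPQ]
  have hJ' : |jbh h ξ ^ (-κ + 1) * J| ≤ B / (1 - a) := by
    rw [abs_mul, abs_of_pos hP]
    calc _ ≤ jbh h ξ ^ (-κ + 1) * (B * (jbh h ξ ^ (κ - 1) / (1 - a))) := by gcongr
      _ = B * (jbh h ξ ^ (-κ + 1) * jbh h ξ ^ (κ - 1)) / (1 - a) := by ring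
      _ = _ := by rw [hPQ, mul_one]
  have hω1 := hωb (ξ / h)
  generalize ω (ξ / h) = w at *
  generalize deriv ω (ξ / h) * (1 / h) = w' at *
  generalize jbh h ξ ^ (-κ + 1) = P at *
  have hrw : (M * w' * P + M * w * (P * ((-κ + 1) * ξ / jbh h ξ ^ 2))) * I +
      M * w * P * (-(q * ξ / jbh h ξ ^ 2) * J) =
      M * (w' * (P * I)) + -(M * (κ - 1) * (w * (ξ / jbh h ξ ^ 2) * (P * I))) +
      -(M * q * (w * (ξ / jbh h ξ ^ 2) * (P * J))) := by ring
  rw [hrw]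
  have hA0 : 0 ≤ A * (jbh h ξ)⁻¹ := (abs_nonneg _).trans hωW
  have hκ0 : 0 ≤ κ - 1 := by linarith
  have t1 : |M * (w' * (P * I))| ≤ M * (A * (jbh h ξ)⁻¹ * (1 / (1 - a))) := by
    rw [abs_mul, abs_mul w', abs_of_pos hM]
    gcongr
  have t2 : |M * (κ - 1) * (w * (ξ / jbh h ξ ^ 2) * (P * I))| ≤
      M * (κ - 1) * (1 * (jbh h ξ)⁻¹ * (1 / (1 - a))) := by
    rw [abs_mul, abs_mul _ (P * I), abs_mul w, abs_of_nonneg (mul_nonneg hM.le hκ0)]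
    gcongr
  have t3 : |M * q * (w * (ξ / jbh h ξ ^ 2) * (P * J))| ≤
      M * q * (1 * (jbh h ξ)⁻¹ * (B / (1 - a))) := by
    rw [abs_mul, abs_mul _ (P * J), abs_mul w, abs_of_nonneg (mul_nonneg hM.le hq)]
    gcongr
  calc _ ≤ M * (A * (jbh h ξ)⁻¹ * (1 / (1 - a))) +
        M * (κ - 1) * (1 * (jbh h ξ)⁻¹ * (1 / (1 - a))) +
        M * q * (1 * (jbh h ξ)⁻¹ * (B / (1 - a))) := by
        refine (abs_add_three _ _ _).trans ?_
        rw [abs_neg, abs_neg]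
        gcongr
    _ = _ := by ring

/-- The bound on the space derivative `∂_x λ`. -/
lemma abs_deriv_symbol_space_le {ψ : ℝ → ℝ} {a T M w P : ℝ} (hψ : Continuous ψ)
    (hψb : ∀ s, |ψ s| ≤ 1) (hM : 0 < M) (hw : |w| ≤ 1) (hP : 0 < P) (x : ℝ) :
    |deriv (fun z => M * w * P * ∫ y in (0 : ℝ)..z, jb y ^ (-a) * ψ (jb y / T)) x| ≤
      M * P * jb x ^ (-a) := by
  have hc : Continuous fun y => jb y ^ (-a) * ψ (jb y / T) :=
    (continuous_jb_rpow _).mul (hψ.comp (continuous_jb.div_const _))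
  rw [((hc.integral_hasStrictDerivAt 0 x).hasDerivAt.const_mul (M * w * P)).deriv]
  have hj := Real.rpow_pos_of_pos (jb_pos x) (-a)
  rw [abs_mul, abs_mul, abs_mul, abs_mul, abs_of_pos hM, abs_of_pos hP, abs_of_pos hj]
  calc M * |w| * P * (jb x ^ (-a) * |ψ (jb x / T)|) ≤ M * 1 * P * (jb x ^ (-a) * 1) := by
        gcongr
        exact hψb _
    _ = _ := by ring

/-- for
`λ_{p-k}(x,ξ) = M·ω(ξ/h)·⟨ξ⟩ₕ^{-k+1}·∫₀ˣ ⟨y⟩^{-(p-k)/(p-1)} ψ(⟨y⟩/⟨ξ⟩ₕ^{p-1}) dy`,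
one has `|∂_ξλ_{p-k}·∂_xλ_{p-k}| ≤ C·M²·⟨x⟩^{-(p-k)/(p-1)}·⟨ξ⟩ₕ^{-k} ≤ C·M²·h⁻¹`,
with `C` independent of `h, M, x, ξ`. -/
theorem stmt10 (p k : ℕ) (hp : 2 ≤ p) (hk2 : 2 ≤ k) (hkp : k ≤ p - 1)
    (R : ℝ) (hR : 1 < R)
    (ω : ℝ → ℝ) (hω : ContDiff ℝ (⊤ : ℕ∞) ω) (hωb : ∀ ξ : ℝ, |ω ξ| ≤ 1)
    (hω0 : ∀ ξ : ℝ, |ξ| ≤ 1 → ω ξ = 0)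
    (hωcp : ∀ ξ₁ ξ₂ : ℝ, R ≤ ξ₁ → R ≤ ξ₂ → ω ξ₁ = ω ξ₂)
    (hωcm : ∀ ξ₁ ξ₂ : ℝ, ξ₁ ≤ -R → ξ₂ ≤ -R → ω ξ₁ = ω ξ₂)
    (ψ : ℝ → ℝ) (hψ : ContDiff ℝ (⊤ : ℕ∞) ψ) (hψc : HasCompactSupport ψ)
    (hψ01 : ∀ y : ℝ, 0 ≤ ψ y ∧ ψ y ≤ 1)
    (hψ1 : ∀ y : ℝ, |y| ≤ 1 / 2 → ψ y = 1)
    (hψ0 : ∀ y : ℝ, 1 ≤ |y| → ψ y = 0) :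
    ∃ C > 0, ∀ M h : ℝ, 0 < M → 1 ≤ h → ∀ x ξ : ℝ,
      |deriv (fun ζ => M * ω (ζ / h) * jbh h ζ ^ (-(k : ℝ) + 1) *
            ∫ y in (0:ℝ)..x,
              jb y ^ (-(((p : ℝ) - k) / ((p : ℝ) - 1))) *
                ψ (jb y / jbh h ζ ^ ((p : ℝ) - 1))) ξ *
          deriv (fun z => M * ω (ξ / h) * jbh h ξ ^ (-(k : ℝ) + 1) *
            ∫ y in (0:ℝ)..z,
              jb y ^ (-(((p : ℝ) - k) / ((p : ℝ) - 1))) *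
                ψ (jb y / jbh h ξ ^ ((p : ℝ) - 1))) x| ≤
        C * M ^ 2 * jb x ^ (-(((p : ℝ) - k) / ((p : ℝ) - 1))) * jbh h ξ ^ (-(k : ℝ)) ∧
      C * M ^ 2 * jb x ^ (-(((p : ℝ) - k) / ((p : ℝ) - 1))) * jbh h ξ ^ (-(k : ℝ)) ≤
        C * M ^ 2 * h⁻¹ := by
  have hk : (2 : ℝ) ≤ k := by exact_mod_cast hk2
  have hkp' : (k : ℝ) + 1 ≤ p := by exact_mod_cast (by omega : k + 1 ≤ p)
  have hq : 0 < (p : ℝ) - 1 := by linarith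
  set a : ℝ := ((p : ℝ) - k) / ((p : ℝ) - 1) with ha
  have ha0 : 0 ≤ a := div_nonneg (by linarith) hq.le
  have ha1 : a < 1 := by rw [ha, div_lt_one hq]; linarith
  have hqa : ((p : ℝ) - 1) * (1 - a) = (k : ℝ) - 1 := by
    rw [ha]; field_simp; ring
  have hω1 : ContDiff ℝ 1 ω := hω.of_le (by exact_mod_cast le_top)
  have hψC1 : ContDiff ℝ 1 ψ := hψ.of_le (by exact_mod_cast le_top)
  have hψb : ∀ s, |ψ s| ≤ 1 := fun s => by
    rw [abs_of_nonneg (hψ01 s).1]; exact (hψ01 s).2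
  have hψd : ∀ s, 1 < |s| → deriv ψ s = 0 := fun s hs => by
    rcases lt_abs.1 hs with hs | hs
    · exact deriv_eq_zero_of_eq_const_on_Ioi (c := 0)
        (fun t ht => hψ0 t (ht.le.trans (le_abs_self t))) hs
    · exact deriv_eq_zero_of_eq_const_on_Iio (c := 0) (r := -1)
        (fun t ht => hψ0 t (by linarith [neg_le_abs t])) (by linarith)
  have hωd : ∀ s, R < |s| → deriv ω s = 0 := fun s hs => by
    rcases lt_abs.1 hs with hs | hs
    · exact deriv_eq_zero_of_eq_const_on_Ioi (fun t ht => hωcp t R ht.le le_rfl) hs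
    · exact deriv_eq_zero_of_eq_const_on_Iio
        (fun t ht => hωcm t (-R) ht.le le_rfl) (by linarith)
  obtain ⟨A, hA0, hA⟩ := exists_abs_le_of_continuous_of_eq_zero
    (f := fun t => deriv ω t * jb t) (r := R) ((hω1.continuous_deriv le_rfl).mul continuous_jb)
    (fun s hs => by simp [hωd s hs])
  obtain ⟨B, hB0, hB⟩ := exists_abs_le_of_continuous_of_eq_zero
    (f := fun s => deriv ψ s * s) (r := 1) ((hψC1.continuous_deriv le_rfl).mul continuous_id)
    (fun s hs => by simp [hψd s hs])
  have ha' : 0 < 1 - a := by linarith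
  have hk1 : 0 < (k : ℝ) - 1 := by linarith
  have hC : 0 < (A + ((k : ℝ) - 1) + ((p : ℝ) - 1) * B) / (1 - a) := by positivity
  refine ⟨(A + ((k : ℝ) - 1) + ((p : ℝ) - 1) * B) / (1 - a), hC, fun M h hM hh x ξ => ?_⟩
  have hW1 : 1 ≤ jbh h ξ := hh.trans (le_jbh ξ)
  have hW : 0 < jbh h ξ := by linarith
  have hh0 : 0 < h := by linarith
  have hP : 0 < jbh h ξ ^ (-(k : ℝ) + 1) := Real.rpow_pos_of_pos hW _
  have h1 := abs_deriv_symbol_le (hω1.differentiable one_ne_zero) hωb hA hψC1 hψb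
    (fun s hs => hψ0 s hs.le) hB hψd ha0 ha1 hq.le (by linarith) hqa hM hh x ξ
  have h2 := abs_deriv_symbol_space_le (a := a) (T := jbh h ξ ^ ((p : ℝ) - 1))
    hψC1.continuous hψb hM (hωb (ξ / h)) hP x
  have hj := Real.rpow_pos_of_pos (jb_pos x) (-a)
  generalize (A + ((k : ℝ) - 1) + ((p : ℝ) - 1) * B) / (1 - a) = C at *
  constructor
  · rw [abs_mul]
    refine (mul_le_mul h1 h2 (abs_nonneg _) (by positivity)).trans (le_of_eq ?_)
    rw [Real.rpow_add_one hW.ne']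
    field_simp
  · have hj1 : jb x ^ (-a) ≤ 1 :=
      Real.rpow_le_one_of_one_le_of_nonpos (one_le_jb x) (by linarith)
    have hWk : jbh h ξ ^ (-(k : ℝ)) ≤ h⁻¹ := by
      calc jbh h ξ ^ (-(k : ℝ)) ≤ jbh h ξ ^ (-1 : ℝ) :=
            Real.rpow_le_rpow_of_exponent_le hW1 (by linarith)
        _ = (jbh h ξ)⁻¹ := Real.rpow_neg_one _
        _ ≤ h⁻¹ := inv_anti₀ hh0 (le_jbh ξ)
    have hWp := Real.rpow_pos_of_pos hW (-(k : ℝ))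
    calc C * M ^ 2 * jb x ^ (-a) * jbh h ξ ^ (-(k : ℝ)) ≤ C * M ^ 2 * 1 * h⁻¹ := by gcongr
      _ = C * M ^ 2 * h⁻¹ := by ring
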